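/- Let P be the path on [n+1] with edges (i, i+1) labeled i for i = 1, …, n (an edge-labeled good forest), and let R be any B-reduction tree with root P. Then the map sending each leaf of R to its underlying unlabeled graph is injective; its image is exactly the set of all noncrossing alternating forests on [n+1] that contain the edge (1, n+1); and every leaf can be transformed by a finite sequence of label swaps into the lexicographic edge-labeling of its underlying forest. -/

import Mathlib

open scoped BigOperators

namespace RPaper

abbrev Vtype (n : ℕ) := Fin (n+1) → ℝ

abbrev Edge (n : ℕ) := Fin (n+1) × Fin (n+1)

abbrev EdgeSet (n : ℕ) := Finset (Edge n)

/-- The vector `e_i - e_j`. -/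
def ev {n : ℕ} (i j : Fin (n+1)) : Vtype n := Pi.single i 1 - Pi.single j 1

/-- Edges are stored as pairs `(i,j)` with `i < j`. -/
def IsGraph {n : ℕ} (E : EdgeSet n) : Prop := ∀ e ∈ E, e.1 < e.2

/-- The simple graph underlying an edge set. -/
def toSG {n : ℕ} (E : EdgeSet n) : SimpleGraph (Fin (n+1)) :=
  SimpleGraph.fromRel (fun a b => (a, b) ∈ E)

def Acyclic {n : ℕ} (E : EdgeSet n) : Prop := (toSG E).IsAcyclic

def IsForest {n : ℕ} (E : EdgeSet n) : Prop := IsGraph E ∧ Acyclic E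

/-- A tree on the full vertex set `[n+1]`: connected and acyclic. -/
def IsTreeG {n : ℕ} (E : EdgeSet n) : Prop := IsGraph E ∧ (toSG E).IsTree

def Noncrossing {n : ℕ} (E : EdgeSet n) : Prop :=
  ¬ ∃ i j k l : Fin (n+1), i < j ∧ j < k ∧ k < l ∧ (i, k) ∈ E ∧ (j, l) ∈ E

def Alternating {n : ℕ} (E : EdgeSet n) : Prop :=
  ¬ ∃ i j k : Fin (n+1), i < j ∧ j < k ∧ (i, j) ∈ E ∧ (j, k) ∈ E

/-- The positive roots `e_i - e_j`, `i < j`. -/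
def PhiPlus (n : ℕ) : Set (Vtype n) := {v | ∃ i j : Fin (n+1), i < j ∧ v = ev i j}

/-- The cone of nonnegative combinations of the vectors of `E`. -/
def cone {n : ℕ} (E : EdgeSet n) : Set (Vtype n) :=
  {x | ∃ c : Edge n → ℝ, (∀ e, 0 ≤ c e) ∧ x = ∑ e ∈ E, c e • ev e.1 e.2}

def Vbar {n : ℕ} (E : EdgeSet n) : Set (Vtype n) := PhiPlus n ∩ cone E

/-- The root polytope of a graph. -/
def RootPoly {n : ℕ} (E : EdgeSet n) : Set (Vtype n) := convexHull ℝ ({0} ∪ Vbar E)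

/-- The full root polytope `P(A_n^+)`. -/
def FullRootPoly (n : ℕ) : Set (Vtype n) := convexHull ℝ ({0} ∪ PhiPlus n)

/-- Transitive closure: `(i,j)`, `i<j`, whenever there is an increasing path in `E`. -/
def closureT {n : ℕ} (E : EdgeSet n) : Set (Edge n) :=
  {p | p.1 < p.2 ∧ Relation.TransGen (fun a b => a < b ∧ (a, b) ∈ E) p.1 p.2}

/-- Noncrossing alternating spanning trees of the transitive closure of `E`. -/
def NCASpanningTrees {n : ℕ} (E : EdgeSet n) : Set (EdgeSet n) :=
  {F | IsTreeG F ∧ Noncrossing F ∧ Alternating F ∧ ↑F ⊆ closureT E}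

/-- The `t`-th dilate of a set. -/
def dilate {n : ℕ} (t : ℕ) (P : Set (Vtype n)) : Set (Vtype n) := (fun x => (t : ℝ) • x) '' P

/-- Number of lattice points of the `t`-th dilate. -/
noncomputable def latticeCount {n : ℕ} (P : Set (Vtype n)) (t : ℕ) : ℕ :=
  Set.ncard {x ∈ dilate t P | ∀ i, ∃ z : ℤ, x i = (z : ℝ)}

/-- Dimension of the affine span of a set. -/
noncomputable def polyDim {n : ℕ} (P : Set (Vtype n)) : ℕ :=
  Module.finrank ℝ (affineSpan ℝ P).direction

/-- The points `0` and `e_i - e_j`, `(i,j) ∈ F`. -/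
def vertSet {n : ℕ} (F : EdgeSet n) : Set (Vtype n) :=
  {0} ∪ {v | ∃ e ∈ F, v = ev e.1 e.2}

/-- An edge-labeled graph: the edge at list position `a` carries label `a+1`. -/
abbrev LGraph (n : ℕ) := List (Edge n)

def LIsGraph {n : ℕ} (L : LGraph n) : Prop := (∀ e ∈ L, e.1 < e.2) ∧ L.Nodup

/-- Two edges are vertex-disjoint. -/
def vDisj {n : ℕ} (e f : Edge n) : Prop :=
  e.1 ≠ f.1 ∧ e.1 ≠ f.2 ∧ e.2 ≠ f.1 ∧ e.2 ≠ f.2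

/-- A label swap: exchange two vertex-disjoint edges carrying consecutive labels. -/
inductive SwapStep {n : ℕ} : LGraph n → LGraph n → Prop
  | mk (l₁ l₂ : LGraph n) (e f : Edge n) (h : vDisj e f) :
      SwapStep (l₁ ++ e :: f :: l₂) (l₁ ++ f :: e :: l₂)

/-- One step: either a label swap, or one of the three results of a B-reduction applied
to edges `(i,j)_a`, `(j,k)_{a+1}` with `i < j < k`. -/
inductive BStep {n : ℕ} : LGraph n → LGraph n → Prop
  | swap {L L' : LGraph n} : SwapStep L L' → BStep L L'
  | r1 (l₁ l₂ : LGraph n) (i j k : Fin (n+1)) (hij : i < j) (hjk : j < k) :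
      BStep (l₁ ++ (i, j) :: (j, k) :: l₂) (l₁ ++ (i, k) :: (i, j) :: l₂)
  | r2 (l₁ l₂ : LGraph n) (i j k : Fin (n+1)) (hij : i < j) (hjk : j < k) :
      BStep (l₁ ++ (i, j) :: (j, k) :: l₂) (l₁ ++ (j, k) :: (i, k) :: l₂)
  | r3 (l₁ l₂ : LGraph n) (i j k : Fin (n+1)) (hij : i < j) (hjk : j < k) :
      BStep (l₁ ++ (i, j) :: (j, k) :: l₂) (l₁ ++ (i, k) :: l₂)

/-- Conditions (i), (ii), (iii) of a good labeling. -/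
def GoodLabels {n : ℕ} (L : LGraph n) : Prop :=
  (∀ (a b : Fin L.length) (i j k : Fin (n+1)), i < j → j < k →
      L.get a = (i, j) → L.get b = (j, k) → (a : ℕ) < b) ∧
  (∀ (a b : Fin L.length) (i j k : Fin (n+1)), j < k →
      L.get a = (i, j) → L.get b = (i, k) → (b : ℕ) < a) ∧
  (∀ (a b : Fin L.length) (i j k : Fin (n+1)), i < k →
      L.get a = (i, j) → L.get b = (k, j) → (b : ℕ) < a)

/-- A good edge-labeled forest. -/
def GoodForest {n : ℕ} (L : LGraph n) : Prop :=
  LIsGraph L ∧ Acyclic L.toFinset ∧ Noncrossing L.toFinset ∧ GoodLabels L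

/-- A labeled graph contains edges `(i,j)_c`, `(j,k)_{c+1}` with `i < j < k`. -/
def HasRedex {n : ℕ} (L : LGraph n) : Prop :=
  ∃ (l₁ l₂ : LGraph n) (i j k : Fin (n+1)),
    i < j ∧ j < k ∧ L = l₁ ++ (i, j) :: (j, k) :: l₂

/-- Finite ternary trees with nodes labeled by edge-labeled graphs. -/
inductive BRTree (n : ℕ) : Type
  | leaf : LGraph n → BRTree n
  | node : LGraph n → BRTree n → BRTree n → BRTree n → BRTree n

namespace BRTree

def root {n : ℕ} : BRTree n → LGraph n
  | leaf L => L
  | node L _ _ _ => L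

/-- A B-reduction tree: each internal node's children are the three results of a
B-reduction applied after finitely many label swaps; no leaf admits a B-reduction,
even after finitely many label swaps. -/
def Valid {n : ℕ} : BRTree n → Prop
  | leaf L => ¬ ∃ L', Relation.ReflTransGen SwapStep L L' ∧ HasRedex L'
  | node L t1 t2 t3 =>
      (∃ (l₁ l₂ : LGraph n) (i j k : Fin (n+1)), i < j ∧ j < k ∧
        Relation.ReflTransGen SwapStep L (l₁ ++ (i, j) :: (j, k) :: l₂) ∧
        t1.root = l₁ ++ (i, k) :: (i, j) :: l₂ ∧
        t2.root = l₁ ++ (j, k) :: (i, k) :: l₂ ∧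
        t3.root = l₁ ++ (i, k) :: l₂) ∧
      t1.Valid ∧ t2.Valid ∧ t3.Valid

def leaves {n : ℕ} : BRTree n → List (LGraph n)
  | leaf L => [L]
  | node _ t1 t2 t3 => t1.leaves ++ t2.leaves ++ t3.leaves

end BRTree

/-- The path `1 - 2 - ⋯ - (n+1)` with edge `(i, i+1)` labeled `i`. -/
def pathGraph (n : ℕ) : LGraph n := List.ofFn (fun i : Fin n => (i.castSucc, i.succ))

/-- `e` is lexicographically smaller than `f`: `e.2 > f.2`, or `e.2 = f.2` and `e.1 > f.1`. -/
def lexLess {n : ℕ} (e f : Edge n) : Prop :=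
  f.2 < e.2 ∨ (e.2 = f.2 ∧ f.1 < e.1)

/-- The labeling is lexicographic: smaller labels go to lexicographically smaller edges. -/
def IsLexLabeled {n : ℕ} (L : LGraph n) : Prop :=
  ∀ a b : Fin L.length, (a : ℕ) < b → lexLess (L.get a) (L.get b)

/-
Attach to each graph the open cone spanned by the roots `e_i - e_j` of its edges `(i, j)`. For a
good forest these roots are linearly independent. Since the roots of `(i, j)` and `(j, k)` add up to
that of `(i, k)`, comparing the two coefficients shows that the open cones of the three results of a
B-reduction partition the open cone of the forest they come from. Hence the open cones of the
leaves partition the open cone of the root.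

A good forest with no redex after label swaps is alternating: insertion sort by label swaps can only
get stuck at a redex, so it succeeds, and in a lexicographic good labeling no two edges can meet
head to tail. Finally, a vector lies in the open cone of at most one noncrossing alternating graph:
its positive and negative parts prescribe the row and column sums of the coefficient matrix, and a
noncrossing matrix is determined by these. So a noncrossing alternating graph is a leaf as soon as
its open cone lies in that of the root, which for the path means that it contains the edge joining
the two ends.
-/

section OpenCone

/-- The open cone spanned by the vectors `v i`, `i ∈ s`: their linear combinations with positive
coefficients. For `s = ∅` it is `{0}`. -/
def openCone {ι V : Type*} (𝕜 : Type*) [Semiring 𝕜] [LT 𝕜] [AddCommMonoid V] [Module 𝕜 V]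
    (v : ι → V) (s : Finset ι) : Set V :=
  {x | ∃ c : ι → 𝕜, (∀ i ∈ s, 0 < c i) ∧ ∑ i ∈ s, c i • v i = x}

theorem openCone_nonempty {ι V : Type*} (𝕜 : Type*) [Semiring 𝕜] [PartialOrder 𝕜] [ZeroLEOneClass 𝕜]
    [NeZero (1 : 𝕜)] [AddCommMonoid V] [Module 𝕜 V] (v : ι → V) (s : Finset ι) :
    (openCone 𝕜 v s).Nonempty :=
  ⟨_, 1, fun _ _ => zero_lt_one, rfl⟩

theorem mem_openCone_insert {𝕜 ι V : Type*} [Semiring 𝕜] [LT 𝕜] [AddCommMonoid V] [Module 𝕜 V]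
    [DecidableEq ι] {v : ι → V} {s : Finset ι} {a : ι} (ha : a ∉ s) {x : V} :
    x ∈ openCone 𝕜 v (insert a s) ↔
      ∃ t : 𝕜, 0 < t ∧ ∃ y ∈ openCone 𝕜 v s, t • v a + y = x := by
  constructor
  · rintro ⟨c, hc, rfl⟩
    rw [Finset.forall_mem_insert] at hc
    exact ⟨c a, hc.1, _, ⟨c, hc.2, rfl⟩, (Finset.sum_insert (f := fun i => c i • v i) ha).symm⟩
  · rintro ⟨t, ht, _, ⟨c, hc, rfl⟩, rfl⟩
    have hne : ∀ i ∈ s, i ≠ a := fun i hi h => ha (h ▸ hi)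
    refine ⟨Function.update c a t, ?_, ?_⟩
    · simpa +contextual [Finset.forall_mem_insert, ht, hne] using hc
    · rw [Finset.sum_insert ha, Function.update_self]
      exact congrArg (t • v a + ·) (Finset.sum_congr rfl fun i hi => by
        rw [Function.update_of_ne (hne i hi)])

/-- Comparing the coefficients of `v p` and `v q` cuts the cone along the ray through
`v p + v q`. -/
theorem openCone_insert_insert_eq_union {𝕜 ι V : Type*} [CommRing 𝕜] [LinearOrder 𝕜]
    [IsStrictOrderedRing 𝕜] [AddCommGroup V] [Module 𝕜 V] [DecidableEq ι] {v : ι → V}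
    {s : Finset ι} {p q r : ι} (hp : p ∉ insert q s) (hq : q ∉ s) (hrp : r ∉ insert p s)
    (hrq : r ∉ insert q s) (hv : v r = v p + v q) :
    openCone 𝕜 v (insert p (insert q s)) =
      openCone 𝕜 v (insert r (insert p s)) ∪ openCone 𝕜 v (insert r (insert q s)) ∪
        openCone 𝕜 v (insert r s) := by
  have hps : p ∉ s := fun h => hp (Finset.mem_insert_of_mem h)
  have hrs : r ∉ s := fun h => hrp (Finset.mem_insert_of_mem h)
  ext x
  simp only [Set.mem_union, mem_openCone_insert hp, mem_openCone_insert hq,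
    mem_openCone_insert hrp, mem_openCone_insert hrq, mem_openCone_insert hps,
    mem_openCone_insert hrs, hv]
  constructor
  · rintro ⟨a, ha, _, ⟨b, hb, y, hy, rfl⟩, rfl⟩
    rcases lt_trichotomy a b with hab | rfl | hab
    · exact .inl (.inr ⟨a, ha, _, ⟨b - a, sub_pos.2 hab, y, hy, rfl⟩, by module⟩)
    · exact .inr ⟨a, ha, y, hy, by module⟩
    · exact .inl (.inl ⟨b, hb, _, ⟨a - b, sub_pos.2 hab, y, hy, rfl⟩, by module⟩)
  · rintro ((⟨a, ha, _, ⟨b, hb, y, hy, rfl⟩, rfl⟩ | ⟨a, ha, _, ⟨b, hb, y, hy, rfl⟩, rfl⟩) |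
      ⟨a, ha, y, hy, rfl⟩)
    · exact ⟨a + b, add_pos ha hb, _, ⟨a, ha, y, hy, rfl⟩, by module⟩
    · exact ⟨a, ha, _, ⟨a + b, add_pos ha hb, y, hy, rfl⟩, by module⟩
    · exact ⟨a, ha, _, ⟨a, ha, y, hy, rfl⟩, by module⟩

theorem exists_linearMap_eq_of_linearIndepOn {K ι V W : Type*} [DivisionRing K] [AddCommGroup V]
    [Module K V] [AddCommGroup W] [Module K W] {v : ι → V} {s : Set ι}
    (hs : LinearIndepOn K v s) (g : ι → W) : ∃ φ : V →ₗ[K] W, ∀ i ∈ s, φ (v i) = g i := by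
  let b := Module.Basis.span hs
  obtain ⟨φ, hφ⟩ := LinearMap.exists_extend (b.constr ℕ fun i => g i)
  refine ⟨φ, fun i hi => ?_⟩
  have hb : (b ⟨i, hi⟩ : V) = v i := congrArg Subtype.val (Module.Basis.span_apply hs ⟨i, hi⟩)
  rw [← hb, ← b.constr_basis ℕ (fun i => g i) ⟨i, hi⟩, ← hφ, LinearMap.comp_apply,
    Submodule.subtype_apply]

/-- The three cones lie on the positive side, on the negative side and inside the hyperplane of a
functional with value `1` at `v p`, `-1` at `v q` and `0` on the rest. -/
theorem pairwise_disjoint_openCone_insert {𝕜 ι V : Type*} [Field 𝕜] [LinearOrder 𝕜]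
    [IsStrictOrderedRing 𝕜] [AddCommGroup V] [Module 𝕜 V] [DecidableEq ι] {v : ι → V}
    {s : Finset ι} {p q r : ι} (hp : p ∉ insert q s) (hq : q ∉ s) (hrp : r ∉ insert p s)
    (hrq : r ∉ insert q s) (hv : v r = v p + v q)
    (hli : LinearIndepOn 𝕜 v (insert p (insert q s) : Finset ι)) :
    [openCone 𝕜 v (insert r (insert p s)), openCone 𝕜 v (insert r (insert q s)),
      openCone 𝕜 v (insert r s)].Pairwise Disjoint := by
  have hps : p ∉ s := fun h => hp (Finset.mem_insert_of_mem h)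
  have hrs : r ∉ s := fun h => hrp (Finset.mem_insert_of_mem h)
  have hpq : p ≠ q := fun h => hp (h ▸ Finset.mem_insert_self _ _)
  obtain ⟨φ, hφ⟩ := exists_linearMap_eq_of_linearIndepOn hli
    fun i => if i = p then (1 : 𝕜) else if i = q then -1 else 0
  have hφp : φ (v p) = 1 := by simp [hφ p]
  have hφq : φ (v q) = -1 := by simp [hφ q, hpq.symm]
  have hφr : φ (v r) = 0 := by simp [hv, hφp, hφq]
  have hφs : ∀ y ∈ openCone 𝕜 v s, φ y = 0 := by
    rintro _ ⟨c, -, rfl⟩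
    rw [map_sum]
    refine Finset.sum_eq_zero fun i hi => ?_
    simp [hφ i (by simp [hi]), ne_of_mem_of_not_mem hi hps, ne_of_mem_of_not_mem hi hq]
  have hpos : ∀ x ∈ openCone 𝕜 v (insert r (insert p s)), 0 < φ x := fun x hx => by
    obtain ⟨a, -, _, hy, rfl⟩ := (mem_openCone_insert hrp).1 hx
    obtain ⟨b, hb, y, hys, rfl⟩ := (mem_openCone_insert hps).1 hy
    simpa [hφr, hφp, hφs y hys] using hb
  have hneg : ∀ x ∈ openCone 𝕜 v (insert r (insert q s)), φ x < 0 := fun x hx => by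
    obtain ⟨a, -, _, hy, rfl⟩ := (mem_openCone_insert hrq).1 hx
    obtain ⟨b, hb, y, hys, rfl⟩ := (mem_openCone_insert hq).1 hy
    simpa [hφr, hφq, hφs y hys] using hb
  have hzero : ∀ x ∈ openCone 𝕜 v (insert r s), φ x = 0 := fun x hx => by
    obtain ⟨a, -, y, hy, rfl⟩ := (mem_openCone_insert hrs).1 hx
    simp [hφr, hφs y hy]
  simp only [List.pairwise_cons, List.mem_cons, List.not_mem_nil, or_false, forall_eq_or_imp,
    forall_eq, Set.disjoint_left, IsEmpty.forall_iff, implies_true, List.Pairwise.nil, and_true]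
  exact ⟨⟨fun x h₁ h₂ => (hpos x h₁).not_gt (hneg x h₂),
    fun x h₁ h₃ => (hpos x h₁).ne' (hzero x h₃)⟩, fun x h₂ h₃ => (hneg x h₂).ne (hzero x h₃)⟩

theorem notMem_span_of_eq_add {R ι V : Type*} [Ring R] [Nontrivial R] [AddCommGroup V] [Module R V]
    {v : ι → V} {s : Set ι} {p q r : ι} (hli : LinearIndepOn R v (insert q s)) (hp : p ∈ s)
    (hq : q ∉ s) (hv : v r = v p + v q) : v r ∉ Submodule.span R (v '' s) := by
  rw [hv, Submodule.add_mem_iff_right _ (Submodule.subset_span (Set.mem_image_of_mem v hp))]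
  exact hli.notMem_span_of_insert hq

theorem notMem_span_insert_of_eq_add {R ι V : Type*} [Ring R] [Nontrivial R] [AddCommGroup V]
    [Module R V] [DecidableEq ι] {v : ι → V} {s : Finset ι} {p q r : ι} (hp : p ∉ insert q s)
    (hq : q ∉ s) (hv : v r = v p + v q)
    (hli : LinearIndepOn R v (insert p (insert q s) : Finset ι)) :
    v r ∉ Submodule.span R (v '' (insert p s : Finset ι)) ∧
      v r ∉ Submodule.span R (v '' (insert q s : Finset ι)) := by
  constructor
  · rw [Finset.insert_comm, Finset.coe_insert] at hli
    exact notMem_span_of_eq_add hli (by simp) (by grind) hv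
  · rw [Finset.coe_insert] at hli
    exact notMem_span_of_eq_add hli (by simp) (by simpa using hp) (hv.trans (add_comm _ _))

end OpenCone

section Roots

variable {n : ℕ}

/-- The root `e_i - e_j` of the edge `(i, j)`, as a family of vectors indexed by edges. -/
def edgeRoot (e : Edge n) : Vtype n := ev e.1 e.2

theorem ev_add_ev (i j k : Fin (n + 1)) : ev i j + ev j k = ev i k := by
  simp [ev]

theorem neg_ev (i j : Fin (n + 1)) : -ev i j = ev j i := by
  simp [ev]

theorem toSG_adj {E : EdgeSet n} {a b : Fin (n + 1)} :
    (toSG E).Adj a b ↔ a ≠ b ∧ ((a, b) ∈ E ∨ (b, a) ∈ E) :=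
  SimpleGraph.fromRel_adj _ a b

/-- A root in the span cannot leave the component of `a`: the sum of the coordinates over that
component vanishes on the roots of all edges. -/
theorem ev_mem_span_iff_reachable {E : EdgeSet n} {a b : Fin (n + 1)} :
    ev a b ∈ Submodule.span ℝ (edgeRoot '' (E : Set (Edge n))) ↔ (toSG E).Reachable a b := by
  classical
  constructor
  · intro hab
    let χ : Vtype n := fun x => if (toSG E).Reachable a x then 1 else 0
    have hχ_ev : ∀ i j, χ ⬝ᵥ ev i j = χ i - χ j := fun i j => by simp [ev, dotProduct_sub]
    have hχ_edge : ∀ e ∈ E, χ ⬝ᵥ edgeRoot e = 0 := fun e he => by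
      have hreach : (toSG E).Reachable e.1 e.2 := by
        rcases eq_or_ne e.1 e.2 with h | h
        · rw [h]
        · exact (toSG_adj.2 ⟨h, .inl he⟩).reachable
      have hiff : (toSG E).Reachable a e.1 ↔ (toSG E).Reachable a e.2 :=
        ⟨fun h => h.trans hreach, fun h => h.trans hreach.symm⟩
      simp [edgeRoot, hχ_ev, χ, hiff]
    have hχ_span : ∀ u ∈ Submodule.span ℝ (edgeRoot '' (E : Set (Edge n))), χ ⬝ᵥ u = 0 := by
      intro u hu
      induction hu using Submodule.span_induction with
      | mem _ h => obtain ⟨e, he, rfl⟩ := h; exact hχ_edge e he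
      | zero => exact dotProduct_zero χ
      | add _ _ _ _ h₁ h₂ => rw [dotProduct_add, h₁, h₂, add_zero]
      | smul t _ _ h => rw [dotProduct_smul, h, smul_zero]
    by_contra hb
    simpa [hχ_ev, χ, hb] using hχ_span _ hab
  · intro hab
    rw [SimpleGraph.reachable_iff_reflTransGen] at hab
    induction hab with
    | refl => simp [ev]
    | @tail c d _ hcd ih =>
      rw [← ev_add_ev a c d]
      refine add_mem ih ?_
      rcases (toSG_adj.1 hcd).2 with h | h
      · exact Submodule.subset_span ⟨_, h, rfl⟩
      · rw [← neg_ev]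
        exact neg_mem (Submodule.subset_span ⟨_, h, rfl⟩)

theorem deleteEdges_toSG {E : EdgeSet n} (hE : IsGraph E) {a b : Fin (n + 1)} (hab : (a, b) ∈ E) :
    (toSG E).deleteEdges {s(a, b)} = toSG (E.erase (a, b)) := by
  ext x y
  have hba : (b, a) ∉ E := fun h => (hE _ hab).not_gt (hE _ h)
  simp only [SimpleGraph.deleteEdges_adj, toSG_adj, Set.mem_singleton_iff, Sym2.eq_iff,
    Finset.mem_erase, ne_eq, Prod.mk.injEq]
  grind

theorem acyclic_iff_linearIndepOn {E : EdgeSet n} (hE : IsGraph E) :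
    Acyclic E ↔ LinearIndepOn ℝ edgeRoot (E : Set (Edge n)) := by
  have hbridge : ∀ a b, (a, b) ∈ E → ((toSG E).IsBridge s(a, b) ↔
      edgeRoot (a, b) ∉ Submodule.span ℝ (edgeRoot '' ((E : Set (Edge n)) \ {(a, b)}))) := by
    intro a b hab
    rw [SimpleGraph.isBridge_iff, deleteEdges_toSG hE hab, ← ev_mem_span_iff_reachable,
      Finset.coe_erase, edgeRoot]
  rw [Acyclic, SimpleGraph.isAcyclic_iff_forall_adj_isBridge, linearIndepOn_iff_notMem_span]
  constructor
  · rintro h ⟨a, b⟩ hab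
    exact (hbridge a b hab).1 (h (toSG_adj.2 ⟨(hE _ hab).ne, .inl hab⟩))
  · intro h a b hab
    rcases (toSG_adj.1 hab).2 with he | he
    · exact (hbridge a b he).2 (h _ he)
    · rw [Sym2.eq_swap]
      exact (hbridge b a he).2 (h _ he)

end Roots

section GoodForests

variable {n : ℕ}

/-- The relation that `e` may carry a smaller label than `f` in a good labeling. -/
def MayPrecede (e f : Edge n) : Prop :=
  e.1 ≠ f.2 ∧ (e.1 = f.1 → f.2 < e.2) ∧ (e.2 = f.2 → f.1 < e.1)

theorem MayPrecede.ne {e f : Edge n} (h : MayPrecede e f) : e ≠ f := by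
  rintro rfl
  exact lt_irrefl _ (h.2.1 rfl)

theorem vDisj.mayPrecede {e f : Edge n} (h : vDisj e f) : MayPrecede f e :=
  ⟨h.2.2.1.symm, fun h' => absurd h'.symm h.1, fun h' => absurd h'.symm h.2.2.2⟩

theorem goodLabels_iff_pairwise_mayPrecede {L : LGraph n} (hL : LIsGraph L) :
    GoodLabels L ↔ L.Pairwise MayPrecede := by
  rw [List.pairwise_iff_get]
  constructor
  · rintro ⟨h₁, h₂, h₃⟩ a b hab
    have hne : L.get a ≠ L.get b := fun h => hab.ne (hL.2.injective_get h)
    refine ⟨fun h => ?_, fun h => ?_, fun h => ?_⟩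
    · exact hab.not_gt (h₁ b a _ _ _ (hL.1 _ (L.get_mem b)) (h ▸ hL.1 _ (L.get_mem a)) rfl
        (Prod.ext h rfl))
    · by_contra! hlt
      have hlt' := hlt.lt_of_ne fun h' => hne (Prod.ext h h')
      exact hab.not_gt (h₂ a b _ _ _ hlt' rfl (Prod.ext h.symm rfl))
    · by_contra! hlt
      have hlt' := hlt.lt_of_ne fun h' => hne (Prod.ext h' h)
      exact hab.not_gt (h₃ a b _ _ _ hlt' rfl (Prod.ext rfl h.symm))
  · intro h
    have hlt : ∀ a b, L.get a ≠ L.get b → ¬ MayPrecede (L.get a) (L.get b) → b < a :=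
      fun a b hne hm => lt_of_not_ge fun hab =>
        hm (h _ _ (hab.lt_of_ne fun hab' => hne (congrArg L.get hab')))
    refine ⟨fun a b i j k hij _ ha hb => hlt b a ?_ ?_, fun a b i j k hjk ha hb => hlt a b ?_ ?_,
      fun a b i j k hik ha hb => hlt a b ?_ ?_⟩ <;>
    simp only [ha, hb, MayPrecede, ne_eq, Prod.mk.injEq] <;> grind

theorem isGraph_toFinset {L : LGraph n} : IsGraph L.toFinset ↔ ∀ e ∈ L, e.1 < e.2 := by
  simp only [IsGraph, List.mem_toFinset]

theorem goodForest_iff {L : LGraph n} : GoodForest L ↔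
    (∀ e ∈ L, e.1 < e.2) ∧ LinearIndepOn ℝ edgeRoot (L.toFinset : Set (Edge n)) ∧
      Noncrossing L.toFinset ∧ L.Pairwise MayPrecede := by
  constructor
  · rintro ⟨hL, hA, hN, hG⟩
    exact ⟨hL.1, (acyclic_iff_linearIndepOn (isGraph_toFinset.2 hL.1)).1 hA, hN,
      (goodLabels_iff_pairwise_mayPrecede hL).1 hG⟩
  · rintro ⟨hlt, hI, hN, hP⟩
    have hL : LIsGraph L := ⟨hlt, hP.imp MayPrecede.ne⟩
    exact ⟨hL, (acyclic_iff_linearIndepOn (isGraph_toFinset.2 hlt)).2 hI, hN,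
      (goodLabels_iff_pairwise_mayPrecede hL).2 hP⟩

theorem SwapStep.perm {L L' : LGraph n} (h : SwapStep L L') : L.Perm L' := by
  obtain ⟨l₁, l₂, e, f, -⟩ := h
  exact (List.Perm.swap f e l₂).append_left l₁

theorem perm_of_swaps {L L' : LGraph n} (h : Relation.ReflTransGen SwapStep L L') :
    L.Perm L' := by
  induction h with
  | refl => rfl
  | tail _ h ih => exact ih.trans h.perm

theorem SwapStep.pairwise_mayPrecede {L L' : LGraph n} (h : SwapStep L L')
    (hL : L.Pairwise MayPrecede) : L'.Pairwise MayPrecede := by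
  obtain ⟨l₁, l₂, e, f, hd⟩ := h
  simp only [List.pairwise_append, List.pairwise_cons, List.forall_mem_cons] at hL ⊢
  have := hd.mayPrecede
  grind

theorem GoodForest.of_swaps {L L' : LGraph n} (hL : GoodForest L)
    (h : Relation.ReflTransGen SwapStep L L') : GoodForest L' := by
  induction h with
  | refl => exact hL
  | tail _ h ih =>
    rw [goodForest_iff] at ih ⊢
    rw [← List.toFinset_eq_of_perm _ _ h.perm]
    exact ⟨fun e he => ih.1 e (h.perm.mem_iff.2 he), ih.2.1, ih.2.2.1,
      h.pairwise_mayPrecede ih.2.2.2⟩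

end GoodForests

section Reductions

variable {n : ℕ}

/-- `L₁`, `L₂`, `L₃` are the three results of a B-reduction applied to `L` after finitely many
label swaps. -/
def IsReduction (L L₁ L₂ L₃ : LGraph n) : Prop :=
  ∃ (l₁ l₂ : LGraph n) (i j k : Fin (n + 1)), i < j ∧ j < k ∧
    Relation.ReflTransGen SwapStep L (l₁ ++ (i, j) :: (j, k) :: l₂) ∧
    L₁ = l₁ ++ (i, k) :: (i, j) :: l₂ ∧
    L₂ = l₁ ++ (j, k) :: (i, k) :: l₂ ∧
    L₃ = l₁ ++ (i, k) :: l₂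

theorem MayPrecede.redex_right {e : Edge n} {i j k : Fin (n + 1)} (hij : i < j) (hjk : j < k)
    (h₁ : MayPrecede e (i, j)) (h₂ : MayPrecede e (j, k))
    (hcr : ¬(e.1 < j ∧ j < e.2 ∧ e.2 < k)) : MayPrecede e (i, k) := by
  grind [MayPrecede]

theorem MayPrecede.redex_left {e : Edge n} {i j k : Fin (n + 1)} (hij : i < j) (hjk : j < k)
    (h₁ : MayPrecede (i, j) e) (h₂ : MayPrecede (j, k) e)
    (hcr : ¬(i < e.1 ∧ e.1 < j ∧ j < e.2)) : MayPrecede (i, k) e := by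
  grind [MayPrecede]

theorem pairwise_mayPrecede_of_redex {l₁ l₂ : LGraph n} {i j k : Fin (n + 1)} (hij : i < j)
    (hjk : j < k) (hN : Noncrossing (l₁ ++ (i, j) :: (j, k) :: l₂).toFinset)
    (hL : (l₁ ++ (i, j) :: (j, k) :: l₂).Pairwise MayPrecede) :
    (l₁ ++ (i, k) :: (i, j) :: l₂).Pairwise MayPrecede ∧
      (l₁ ++ (j, k) :: (i, k) :: l₂).Pairwise MayPrecede := by
  have hik_ij : MayPrecede (i, k) (i, j) := by grind [MayPrecede]
  have hjk_ik : MayPrecede (j, k) (i, k) := by grind [MayPrecede]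
  simp only [List.pairwise_append, List.pairwise_cons, List.forall_mem_cons] at hL
  have hl₁ : ∀ e ∈ l₁, MayPrecede e (i, k) := fun e he =>
    .redex_right hij hjk (hL.2.2 e he).1 (hL.2.2 e he).2.1 fun h =>
      hN ⟨e.1, j, e.2, k, h.1, h.2.1, h.2.2, by simp [he], by simp⟩
  have hl₂ : ∀ e ∈ l₂, MayPrecede (i, k) e := fun e he =>
    .redex_left hij hjk (hL.2.1.1.2 e he) (hL.2.1.2.1 e he) fun h =>
      hN ⟨i, e.1, j, e.2, h.1, h.2.1, h.2.2, by simp, by simp [he]⟩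
  simp only [List.pairwise_append, List.pairwise_cons, List.forall_mem_cons]
  grind

theorem noncrossing_insert_of_redex {l₁ l₂ : LGraph n} {i j k : Fin (n + 1)} (hij : i < j)
    (hjk : j < k) (hN : Noncrossing (l₁ ++ (i, j) :: (j, k) :: l₂).toFinset)
    (hL : (l₁ ++ (i, j) :: (j, k) :: l₂).Pairwise MayPrecede) :
    Noncrossing (insert (i, k) (l₁ ++ (i, j) :: (j, k) :: l₂).toFinset) := by
  set E := (l₁ ++ (i, j) :: (j, k) :: l₂).toFinset with hE
  have hijE : (i, j) ∈ E := by simp [hE]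
  have hjkE : (j, k) ∈ E := by simp [hE]
  have hpos : ∀ e ∈ E, e = (i, j) ∨ e = (j, k) ∨ MayPrecede e (i, j) ∨ MayPrecede (j, k) e := by
    simp only [List.pairwise_append, List.pairwise_cons, List.forall_mem_cons] at hL
    simp only [hE, List.mem_toFinset, List.mem_append, List.mem_cons]
    grind
  have hjd : ∀ d, k < d → (j, d) ∉ E := fun d hd h => by
    rcases hpos _ h with h | h | h | h <;> grind [MayPrecede]
  have haj : ∀ a, a < i → (a, j) ∉ E := fun a ha h => by
    rcases hpos _ h with h | h | h | h <;> grind [MayPrecede]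
  rintro ⟨a, b, c, d, hab, hbc, hcd, hac, hbd⟩
  rw [Finset.mem_insert, Prod.mk.injEq] at hac hbd
  rcases hac with ⟨rfl, rfl⟩ | hac <;> rcases hbd with ⟨rfl, rfl⟩ | hbd
  · exact lt_irrefl _ hab
  · rcases lt_trichotomy b j with hbj | rfl | hbj
    · exact hN ⟨a, b, j, d, hab, hbj, by grind, hijE, hbd⟩
    · exact hjd d hcd hbd
    · exact hN ⟨j, b, c, d, hbj, hbc, hcd, hjkE, hbd⟩
  · rcases lt_trichotomy c j with hcj | rfl | hcj
    · exact hN ⟨a, b, c, j, hab, hbc, hcj, hac, hijE⟩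
    · exact haj a hab hac
    · exact hN ⟨a, j, c, d, by grind, hcj, hcd, hac, hjkE⟩
  · exact hN ⟨a, b, c, d, hab, hbc, hcd, hac, hbd⟩

theorem Noncrossing.mono {E F : EdgeSet n} (hF : Noncrossing F) (h : E ⊆ F) : Noncrossing E :=
  fun ⟨i, j, k, l, hij, hjk, hkl, hik, hjl⟩ => hF ⟨i, j, k, l, hij, hjk, hkl, h hik, h hjl⟩

theorem toFinset_append_cons (l₁ l₂ : LGraph n) (e : Edge n) :
    (l₁ ++ e :: l₂).toFinset = insert e (l₁ ++ l₂).toFinset := by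
  rw [List.toFinset_eq_of_perm _ _ List.perm_middle, List.toFinset_cons]

theorem IsReduction.exists_toFinset_eq_insert {L L₁ L₂ L₃ : LGraph n} (hL : GoodForest L)
    (h : IsReduction L L₁ L₂ L₃) : ∃ (s : EdgeSet n) (p q r : Edge n),
      L.toFinset = insert p (insert q s) ∧ L₁.toFinset = insert r (insert p s) ∧
      L₂.toFinset = insert r (insert q s) ∧ L₃.toFinset = insert r s ∧
      p ∉ insert q s ∧ q ∉ s ∧ edgeRoot r = edgeRoot p + edgeRoot q := by
  obtain ⟨l₁, l₂, i, j, k, -, -, hsw, rfl, rfl, rfl⟩ := h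
  have hnd := (perm_of_swaps hsw).nodup_iff.1 hL.1.2
  simp only [List.nodup_middle, List.nodup_cons, List.mem_append, List.mem_cons] at hnd
  rw [List.toFinset_eq_of_perm _ _ (perm_of_swaps hsw)]
  refine ⟨(l₁ ++ l₂).toFinset, (i, j), (j, k), (i, k), ?_, ?_, ?_, ?_, ?_, ?_,
    (ev_add_ev i j k).symm⟩
  iterate 4 grind [toFinset_append_cons]
  · simpa only [Finset.mem_insert, List.mem_toFinset, List.mem_append, or_left_comm] using hnd.1
  · simpa only [List.mem_toFinset, List.mem_append] using hnd.2.1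

theorem IsReduction.linearIndepOn {L L₁ L₂ L₃ : LGraph n} (hL : GoodForest L)
    (h : IsReduction L L₁ L₂ L₃) :
    LinearIndepOn ℝ edgeRoot (L₁.toFinset : Set (Edge n)) ∧
      LinearIndepOn ℝ edgeRoot (L₂.toFinset : Set (Edge n)) := by
  have hI := (goodForest_iff.1 hL).2.1
  obtain ⟨s, p, q, r, hL, hL₁, hL₂, -, hp, hq, hr⟩ := h.exists_toFinset_eq_insert hL
  rw [hL] at hI
  rw [hL₁, hL₂, Finset.coe_insert r (insert p s), Finset.coe_insert r (insert q s)]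
  obtain ⟨hr₁, hr₂⟩ := notMem_span_insert_of_eq_add hp hq hr hI
  exact ⟨(hI.mono (by grind)).insert hr₁, (hI.mono (by grind)).insert hr₂⟩

theorem IsReduction.goodForest {L L₁ L₂ L₃ : LGraph n} (hL : GoodForest L)
    (h : IsReduction L L₁ L₂ L₃) : GoodForest L₁ ∧ GoodForest L₂ ∧ GoodForest L₃ := by
  have ⟨hI₁, hI₂⟩ := h.linearIndepOn hL
  obtain ⟨l₁, l₂, i, j, k, hij, hjk, hsw, rfl, rfl, rfl⟩ := h
  obtain ⟨hlt, -, hN, hP⟩ := goodForest_iff.1 (hL.of_swaps hsw)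
  obtain ⟨hP₁, hP₂⟩ := pairwise_mayPrecede_of_redex hij hjk hN hP
  have hN' := noncrossing_insert_of_redex hij hjk hN hP
  have hlt' : ∀ e ∈ insert (i, k) (l₁ ++ (i, j) :: (j, k) :: l₂).toFinset, e.1 < e.2 := by
    simpa only [Finset.forall_mem_insert, List.mem_toFinset] using ⟨hij.trans hjk, hlt⟩
  have hgood : ∀ L', L'.Pairwise MayPrecede →
      LinearIndepOn ℝ edgeRoot (L'.toFinset : Set (Edge n)) →
      L'.toFinset ⊆ insert (i, k) (l₁ ++ (i, j) :: (j, k) :: l₂).toFinset → GoodForest L' :=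
    fun L' hP' hI' hsub => goodForest_iff.2
      ⟨fun e he => hlt' e (hsub (List.mem_toFinset.2 he)), hI', hN'.mono hsub, hP'⟩
  have hsub₃ : (l₁ ++ (i, k) :: l₂).Sublist (l₁ ++ (i, k) :: (i, j) :: l₂) := by simp
  have hI₃ : LinearIndepOn ℝ edgeRoot ((l₁ ++ (i, k) :: l₂).toFinset : Set (Edge n)) :=
    hI₁.mono fun e he => List.mem_toFinset.2 (hsub₃.subset (List.mem_toFinset.1 he))
  refine ⟨hgood _ hP₁ hI₁ ?_, hgood _ hP₂ hI₂ ?_, hgood _ (hP₁.sublist hsub₃) hI₃ ?_⟩ <;>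
  · intro e
    simp only [List.mem_toFinset, List.mem_append, List.mem_cons, Finset.mem_insert]
    tauto

theorem IsReduction.openCone_eq_union {L L₁ L₂ L₃ : LGraph n} (hL : GoodForest L)
    (h : IsReduction L L₁ L₂ L₃) : openCone ℝ edgeRoot L.toFinset =
      openCone ℝ edgeRoot L₁.toFinset ∪ openCone ℝ edgeRoot L₂.toFinset ∪
        openCone ℝ edgeRoot L₃.toFinset := by
  have hI := (goodForest_iff.1 hL).2.1
  obtain ⟨s, p, q, r, hL, hL₁, hL₂, hL₃, hp, hq, hr⟩ := h.exists_toFinset_eq_insert hL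
  rw [hL] at hI
  obtain ⟨hrp, hrq⟩ := notMem_span_insert_of_eq_add hp hq hr hI
  rw [hL, hL₁, hL₂, hL₃]
  exact openCone_insert_insert_eq_union hp hq
    (fun h => hrp (Submodule.subset_span (Set.mem_image_of_mem _ h)))
    (fun h => hrq (Submodule.subset_span (Set.mem_image_of_mem _ h))) hr

theorem IsReduction.pairwise_disjoint_openCone {L L₁ L₂ L₃ : LGraph n} (hL : GoodForest L)
    (h : IsReduction L L₁ L₂ L₃) :
    [openCone ℝ edgeRoot L₁.toFinset, openCone ℝ edgeRoot L₂.toFinset,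
      openCone ℝ edgeRoot L₃.toFinset].Pairwise Disjoint := by
  have hI := (goodForest_iff.1 hL).2.1
  obtain ⟨s, p, q, r, hL, hL₁, hL₂, hL₃, hp, hq, hr⟩ := h.exists_toFinset_eq_insert hL
  rw [hL] at hI
  obtain ⟨hrp, hrq⟩ := notMem_span_insert_of_eq_add hp hq hr hI
  rw [hL₁, hL₂, hL₃]
  exact pairwise_disjoint_openCone_insert hp hq
    (fun h => hrp (Submodule.subset_span (Set.mem_image_of_mem _ h)))
    (fun h => hrq (Submodule.subset_span (Set.mem_image_of_mem _ h))) hr hI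

end Reductions

section Sorting

variable {n : ℕ}

/-- `L` admits a B-reduction after finitely many label swaps. -/
def Reducible (L : LGraph n) : Prop :=
  ∃ L', Relation.ReflTransGen SwapStep L L' ∧ HasRedex L'

theorem SwapStep.cons {L L' : LGraph n} (h : SwapStep L L') (e : Edge n) :
    SwapStep (e :: L) (e :: L') := by
  obtain ⟨l₁, l₂, f, g, hd⟩ := h
  exact SwapStep.mk (e :: l₁) l₂ f g hd

theorem swaps_cons {L L' : LGraph n} (h : Relation.ReflTransGen SwapStep L L') (e : Edge n) :
    Relation.ReflTransGen SwapStep (e :: L) (e :: L') :=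
  h.lift (e :: ·) fun _ _ h => h.cons e

theorem Reducible.of_swaps {L L' : LGraph n} (hL' : Reducible L')
    (h : Relation.ReflTransGen SwapStep L L') : Reducible L :=
  let ⟨L'', h', hL''⟩ := hL'
  ⟨L'', h.trans h', hL''⟩

theorem Reducible.cons {L : LGraph n} (h : Reducible L) (e : Edge n) : Reducible (e :: L) := by
  obtain ⟨_, h, l₁, l₂, i, j, k, hij, hjk, rfl⟩ := h
  exact ⟨_, swaps_cons h e, e :: l₁, l₂, i, j, k, hij, hjk, rfl⟩

theorem lexLess.trans {e f g : Edge n} (hef : lexLess e f) (hfg : lexLess f g) : lexLess e g := by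
  grind [lexLess]

theorem lexLess_or_lexLess_of_ne {e f : Edge n} (h : e ≠ f) : lexLess e f ∨ lexLess f e := by
  grind [lexLess]

theorem isLexLabeled_iff_pairwise {L : LGraph n} : IsLexLabeled L ↔ L.Pairwise lexLess :=
  List.pairwise_iff_get.symm

/-- Insertion step of insertion sort: `e` moves right past each `f` that should precede it,
unless `e` and `f` form a redex. -/
theorem reducible_cons_or_exists_pairwise_lexLess {e : Edge n} {l : LGraph n} (he : e.1 < e.2)
    (hlt : ∀ f ∈ l, f.1 < f.2) (hP : ∀ f ∈ l, MayPrecede e f) (hl : l.Pairwise lexLess) :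
    Reducible (e :: l) ∨
      ∃ l', Relation.ReflTransGen SwapStep (e :: l) l' ∧ l'.Pairwise lexLess := by
  induction l with
  | nil => exact .inr ⟨[e], .refl, List.pairwise_singleton _ _⟩
  | cons f l ih =>
    rw [List.forall_mem_cons] at hlt hP
    obtain ⟨hfl, hl'⟩ := List.pairwise_cons.1 hl
    by_cases hef : lexLess e f
    · refine .inr ⟨e :: f :: l, .refl, List.pairwise_cons.2 ⟨?_, hl⟩⟩
      exact List.forall_mem_cons.2 ⟨hef, fun g hg => hef.trans (hfl g hg)⟩
    have hfe : lexLess f e := (lexLess_or_lexLess_of_ne hP.1.ne).resolve_left hef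
    by_cases hredex : e.2 = f.1
    · have hf : f = (e.2, f.2) := Prod.ext hredex.symm rfl
      exact .inl ⟨_, .refl, [], l, e.1, e.2, f.2, he, hredex ▸ hlt.1, congrArg (e :: · :: l) hf⟩
    have hd : vDisj e f := ⟨fun h => hef (.inl (hP.1.2.1 h)), hP.1.1, hredex,
      fun h => hef (.inr ⟨h, hP.1.2.2 h⟩)⟩
    have hswap : Relation.ReflTransGen SwapStep (e :: f :: l) (f :: e :: l) :=
      .single (SwapStep.mk [] l e f hd)
    rcases ih hlt.2 hP.2 hl' with hred | ⟨l', hsw, hsorted⟩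
    · exact .inl ((hred.cons f).of_swaps hswap)
    · refine .inr ⟨f :: l', hswap.trans (swaps_cons hsw f), List.pairwise_cons.2 ⟨?_, hsorted⟩⟩
      intro g hg
      rcases List.mem_cons.1 ((perm_of_swaps hsw).mem_iff.2 hg) with rfl | hg
      · exact hfe
      · exact hfl g hg

theorem reducible_or_exists_pairwise_lexLess {L : LGraph n} (hlt : ∀ e ∈ L, e.1 < e.2)
    (hP : L.Pairwise MayPrecede) :
    Reducible L ∨ ∃ L', Relation.ReflTransGen SwapStep L L' ∧ L'.Pairwise lexLess := by
  induction L with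
  | nil => exact .inr ⟨[], .refl, .nil⟩
  | cons e l ih =>
    rw [List.forall_mem_cons] at hlt
    rw [List.pairwise_cons] at hP
    rcases ih hlt.2 hP.2 with hred | ⟨l', hsw, hsorted⟩
    · exact .inl (hred.cons e)
    have hmem : ∀ f ∈ l', f ∈ l := fun f => (perm_of_swaps hsw).mem_iff.2
    have hsw' := swaps_cons hsw e
    exact (reducible_cons_or_exists_pairwise_lexLess hlt.1 (fun f hf => hlt.2 f (hmem f hf))
      (fun f hf => hP.1 f (hmem f hf)) hsorted).imp (·.of_swaps hsw')
        fun ⟨l'', h, hs⟩ => ⟨l'', hsw'.trans h, hs⟩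

theorem GoodForest.exists_isLexLabeled {L : LGraph n} (hL : GoodForest L) (hred : ¬Reducible L) :
    ∃ L', Relation.ReflTransGen SwapStep L L' ∧ IsLexLabeled L' := by
  simp only [isLexLabeled_iff_pairwise]
  have ⟨hlt, _, _, hP⟩ := goodForest_iff.1 hL
  exact (reducible_or_exists_pairwise_lexLess hlt hP).resolve_left hred

theorem GoodForest.alternating {L : LGraph n} (hL : GoodForest L) (hred : ¬Reducible L) :
    Alternating L.toFinset := by
  obtain ⟨L', hsw, hlex⟩ := hL.exists_isLexLabeled hred
  rw [List.toFinset_eq_of_perm _ _ (perm_of_swaps hsw)]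
  obtain ⟨hlt, -, -, hP⟩ := goodForest_iff.1 (hL.of_swaps hsw)
  have hne : L'.Pairwise fun e f => e.2 ≠ f.1 ∧ f.2 ≠ e.1 :=
    (hP.and (isLexLabeled_iff_pairwise.1 hlex)).imp_of_mem fun {e f} _ hf _ => by
      have := hlt f hf
      grind [MayPrecede, lexLess]
  have : Std.Symm fun e f : Edge n => e.2 ≠ f.1 ∧ f.2 ≠ e.1 := ⟨fun _ _ => And.symm⟩
  rintro ⟨i, j, k, hij, -, hi, hj⟩
  exact (hne.forall (List.mem_toFinset.1 hi) (List.mem_toFinset.1 hj)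
    fun h => hij.ne (congrArg Prod.fst h)).1 rfl

end Sorting

section Leaves

variable {n : ℕ} {R : BRTree n}

theorem BRTree.Valid.not_reducible (hR : R.Valid) : ∀ L ∈ R.leaves, ¬Reducible L := by
  induction R with
  | leaf L => exact List.forall_mem_singleton.2 hR
  | node L t₁ t₂ t₃ ih₁ ih₂ ih₃ =>
    obtain ⟨-, h₁, h₂, h₃⟩ := hR
    simpa only [BRTree.leaves, List.forall_mem_append] using ⟨⟨ih₁ h₁, ih₂ h₂⟩, ih₃ h₃⟩

theorem BRTree.Valid.goodForest (hR : R.Valid) (hroot : GoodForest R.root) :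
    ∀ L ∈ R.leaves, GoodForest L := by
  induction R with
  | leaf L => exact List.forall_mem_singleton.2 hroot
  | node L t₁ t₂ t₃ ih₁ ih₂ ih₃ =>
    obtain ⟨hred, h₁, h₂, h₃⟩ := hR
    obtain ⟨hg₁, hg₂, hg₃⟩ := IsReduction.goodForest hroot hred
    simpa only [BRTree.leaves, List.forall_mem_append] using
      ⟨⟨ih₁ h₁ hg₁, ih₂ h₂ hg₂⟩, ih₃ h₃ hg₃⟩

theorem BRTree.Valid.mem_openCone_root_iff (hR : R.Valid) (hroot : GoodForest R.root)
    {x : Vtype n} : x ∈ openCone ℝ edgeRoot R.root.toFinset ↔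
      ∃ L ∈ R.leaves, x ∈ openCone ℝ edgeRoot L.toFinset := by
  induction R with
  | leaf L => simp [BRTree.leaves, BRTree.root]
  | node L t₁ t₂ t₃ ih₁ ih₂ ih₃ =>
    obtain ⟨hred, h₁, h₂, h₃⟩ := hR
    obtain ⟨hg₁, hg₂, hg₃⟩ := IsReduction.goodForest hroot hred
    rw [IsReduction.openCone_eq_union hroot hred, Set.mem_union, Set.mem_union, ih₁ h₁ hg₁,
      ih₂ h₂ hg₂, ih₃ h₃ hg₃]
    simp only [BRTree.leaves, List.mem_append, or_and_right, exists_or]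

theorem BRTree.Valid.pairwise_disjoint_openCone (hR : R.Valid) (hroot : GoodForest R.root) :
    R.leaves.Pairwise fun L L' =>
      Disjoint (openCone ℝ edgeRoot L.toFinset) (openCone ℝ edgeRoot L'.toFinset) := by
  induction R with
  | leaf L => exact List.pairwise_singleton _ _
  | node L t₁ t₂ t₃ ih₁ ih₂ ih₃ =>
    obtain ⟨hred, h₁, h₂, h₃⟩ := hR
    obtain ⟨hg₁, hg₂, hg₃⟩ := IsReduction.goodForest hroot hred
    have hsub : ∀ t : BRTree n, t.Valid → GoodForest t.root → ∀ L ∈ t.leaves,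
        openCone ℝ edgeRoot L.toFinset ⊆ openCone ℝ edgeRoot t.root.toFinset :=
      fun t ht hg L hL x hx => (ht.mem_openCone_root_iff hg).2 ⟨L, hL, hx⟩
    have hdisj := IsReduction.pairwise_disjoint_openCone hroot hred
    simp only [List.pairwise_cons, List.forall_mem_cons] at hdisj
    simp only [BRTree.leaves, List.pairwise_append, List.mem_append]
    refine ⟨⟨ih₁ h₁ hg₁, ih₂ h₂ hg₂, ?_⟩, ih₃ h₃ hg₃, ?_⟩
    · exact fun L hL L' hL' => hdisj.1.1.mono (hsub _ h₁ hg₁ L hL) (hsub _ h₂ hg₂ L' hL')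
    · rintro L (hL | hL) L' hL'
      · exact hdisj.1.2.1.mono (hsub _ h₁ hg₁ L hL) (hsub _ h₃ hg₃ L' hL')
      · exact hdisj.2.1.1.mono (hsub _ h₂ hg₂ L hL) (hsub _ h₃ hg₃ L' hL')

end Leaves

section Uniqueness

variable {ι M : Type*} [LinearOrder ι] [AddCommMonoid M] [LinearOrder M]

/-- A nonnegative matrix supported above the diagonal, no two positive entries of which cross. The
coefficients of a point of the open cone of a noncrossing graph form such a matrix. -/
structure IsNoncrossingMatrix (c : ι → ι → M) : Prop where
  nonneg : ∀ i j, 0 ≤ c i j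
  lt_of_pos : ∀ {i j}, 0 < c i j → i < j
  noncrossing : ∀ {i j k l}, i < j → j < k → k < l → 0 < c i k → ¬0 < c j l

namespace IsNoncrossingMatrix

variable [IsOrderedCancelAddMonoid M] [Fintype ι] {c d : ι → ι → M}

/-- If `c i j < d i j`, then equality of the sums forces `c` to exceed `d` elsewhere in row `i` and
in column `j`, at two entries that cross. -/
theorem le_of_sum_eq_of_forall_eq (hc : IsNoncrossingMatrix c) (hd : IsNoncrossingMatrix d)
    {i j : ι} (hrow : ∑ l, c i l = ∑ l, d i l) (hcol : ∑ k, c k j = ∑ k, d k j)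
    (hi : ∀ l < j, c i l = d i l) (hj : ∀ k > i, c k j = d k j) : d i j ≤ c i j := by
  by_contra! hlt
  obtain ⟨l, hl⟩ : ∃ l, d i l < c i l := by
    by_contra! hle
    exact hrow.not_lt (Finset.sum_lt_sum (fun l _ => hle l) ⟨j, Finset.mem_univ j, hlt⟩)
  obtain ⟨k, hk⟩ : ∃ k, d k j < c k j := by
    by_contra! hle
    exact hcol.not_lt (Finset.sum_lt_sum (fun k _ => hle k) ⟨i, Finset.mem_univ i, hlt⟩)
  have hij : i < j := hd.lt_of_pos ((hc.nonneg i j).trans_lt hlt)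
  have hjl : j < l := lt_of_not_ge fun h => h.eq_or_lt.elim
    (fun h => hl.asymm (h ▸ hlt)) fun h => hl.ne' (hi l h)
  have hki : k < i := lt_of_not_ge fun h => h.eq_or_lt.elim
    (fun h => hk.asymm (h ▸ hlt)) fun h => hk.ne' (hj k h)
  exact hc.noncrossing hki hij hjl ((hd.nonneg k j).trans_lt hk) ((hd.nonneg i l).trans_lt hl)

theorem eq_of_sum_eq (hc : IsNoncrossingMatrix c) (hd : IsNoncrossingMatrix d)
    (hrow : ∀ i, ∑ j, c i j = ∑ j, d i j) (hcol : ∀ j, ∑ i, c i j = ∑ i, d i j) : c = d := by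
  suffices h : ∀ p : ιᵒᵈ × ι, c (OrderDual.ofDual p.1) p.2 = d (OrderDual.ofDual p.1) p.2 from
    funext₂ fun i j => h (OrderDual.toDual i, j)
  intro p
  induction p using WellFoundedLT.induction with
  | ind p ih =>
    have hi : ∀ l < p.2, c (OrderDual.ofDual p.1) l = d (OrderDual.ofDual p.1) l :=
      fun l hl => ih (p.1, l) (Prod.mk_lt_mk_iff_right.2 hl)
    have hj : ∀ k > OrderDual.ofDual p.1, c k p.2 = d k p.2 :=
      fun k hk => ih (OrderDual.toDual k, p.2) (Prod.mk_lt_mk_iff_left.2 hk)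
    exact le_antisymm
      (hd.le_of_sum_eq_of_forall_eq hc (hrow _).symm (hcol _).symm (fun l h => (hi l h).symm)
        fun k h => (hj k h).symm)
      (hc.le_of_sum_eq_of_forall_eq hd (hrow _) (hcol _) hi hj)

end IsNoncrossingMatrix

variable {n : ℕ}

theorem sum_sum_smul_ev_apply (a : Fin (n + 1) → Fin (n + 1) → ℝ) (x : Fin (n + 1)) :
    (∑ i, ∑ j, a i j • ev i j : Vtype n) x = ∑ j, a x j - ∑ i, a i x := by
  simp [ev, Finset.sum_apply, mul_sub, Finset.sum_sub_distrib, Pi.single_apply]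

/-- In an alternating graph no vertex has edges on both sides, so the two sums at a vertex are the
positive and negative parts of the coordinate. -/
theorem exists_isNoncrossingMatrix_of_mem_openCone {S : EdgeSet n} (hS : IsGraph S)
    (hN : Noncrossing S) (hA : Alternating S) {x : Vtype n} (hx : x ∈ openCone ℝ edgeRoot S) :
    ∃ c : Fin (n + 1) → Fin (n + 1) → ℝ, IsNoncrossingMatrix c ∧ (∀ i j, 0 < c i j ↔ (i, j) ∈ S) ∧
      (∀ i, ∑ j, c i j = (x i)⁺) ∧ ∀ j, ∑ i, c i j = (x j)⁻ := by
  obtain ⟨a, ha, rfl⟩ := hx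
  set c : Fin (n + 1) → Fin (n + 1) → ℝ := fun i j => if (i, j) ∈ S then a (i, j) else 0 with hc
  have hpos : ∀ i j, 0 < c i j ↔ (i, j) ∈ S := fun i j => by
    by_cases h : (i, j) ∈ S <;> simp [hc, h, ha]
  have hnonneg : ∀ i j, 0 ≤ c i j := fun i j => by
    by_cases h : (i, j) ∈ S <;> simp [hc, h, (ha _ _).le]
  have hsum : ∑ e ∈ S, a e • edgeRoot e = ∑ i, ∑ j, c i j • ev i j := by
    rw [← Fintype.sum_prod_type']
    simp [hc, edgeRoot, ite_smul]
  have hparts : ∀ y, ∑ j, c y j = 0 ∨ ∑ i, c i y = 0 := fun y => by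
    by_contra! h
    obtain ⟨j, -, hj⟩ := Finset.exists_ne_zero_of_sum_ne_zero h.1
    obtain ⟨i, -, hi⟩ := Finset.exists_ne_zero_of_sum_ne_zero h.2
    have hiS := (hpos i y).1 ((hnonneg i y).lt_of_ne' hi)
    have hjS := (hpos y j).1 ((hnonneg y j).lt_of_ne' hj)
    exact hA ⟨i, y, j, hS _ hiS, hS _ hjS, hiS, hjS⟩
  have hrow : ∀ y, 0 ≤ ∑ j, c y j := fun y => Finset.sum_nonneg fun j _ => hnonneg y j
  have hcol : ∀ y, 0 ≤ ∑ i, c i y := fun y => Finset.sum_nonneg fun i _ => hnonneg i y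
  refine ⟨c, ⟨hnonneg, fun h => hS _ ((hpos _ _).1 h), fun hij hjk hkl h h' =>
    hN ⟨_, _, _, _, hij, hjk, hkl, (hpos _ _).1 h, (hpos _ _).1 h'⟩⟩, hpos, ?_, ?_⟩ <;>
  · intro y
    rw [hsum, sum_sum_smul_ev_apply]
    rcases hparts y with h | h <;> simp [h, hrow, hcol]

theorem eq_of_mem_openCone_of_mem_openCone {S T : EdgeSet n} (hS : IsGraph S) (hT : IsGraph T)
    (hNS : Noncrossing S) (hNT : Noncrossing T) (hAS : Alternating S) (hAT : Alternating T)
    {x : Vtype n} (hxS : x ∈ openCone ℝ edgeRoot S) (hxT : x ∈ openCone ℝ edgeRoot T) : S = T := by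
  obtain ⟨c, hc, hcS, hcrow, hccol⟩ := exists_isNoncrossingMatrix_of_mem_openCone hS hNS hAS hxS
  obtain ⟨d, hd, hdT, hdrow, hdcol⟩ := exists_isNoncrossingMatrix_of_mem_openCone hT hNT hAT hxT
  have hcd : c = d := hc.eq_of_sum_eq hd (fun i => (hcrow i).trans (hdrow i).symm)
    fun j => (hccol j).trans (hdcol j).symm
  ext ⟨i, j⟩
  rw [← hcS, ← hdT, hcd]

end Uniqueness

section Path

variable {n : ℕ}

theorem mem_toFinset_pathGraph {e : Edge n} :
    e ∈ (pathGraph n).toFinset ↔ ∃ i : Fin n, (i.castSucc, i.succ) = e := by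
  rw [List.mem_toFinset, pathGraph, List.mem_ofFn]

theorem isGraph_pathGraph : IsGraph (pathGraph n).toFinset := by
  intro e he
  obtain ⟨i, rfl⟩ := mem_toFinset_pathGraph.1 he
  exact Fin.castSucc_lt_succ

/-- The sum of the coordinates up to `x`. The prefix sums of a point of the span of the path are
its coefficients with respect to the edges of the path. -/
def prefixSum (x : Fin (n + 1)) : Vtype n →ₗ[ℝ] ℝ := ∑ y ∈ Finset.Iic x, LinearMap.proj y

theorem prefixSum_apply (x : Fin (n + 1)) (v : Vtype n) :
    prefixSum x v = ∑ y ∈ Finset.Iic x, v y := by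
  simp [prefixSum]

theorem eq_of_prefixSum_eq {u v : Vtype n} (h : ∀ x, prefixSum x u = prefixSum x v) : u = v := by
  funext x
  induction x using WellFoundedLT.induction with
  | ind x ih =>
    have hx := h x
    rw [prefixSum_apply, prefixSum_apply, ← Finset.Iio_insert, Finset.sum_insert (by simp),
      Finset.sum_insert (by simp),
      Finset.sum_congr rfl fun y hy => ih y (Finset.mem_Iio.1 hy)] at hx
    exact add_right_cancel hx

theorem prefixSum_edgeRoot {e : Edge n} (he : e.1 < e.2) (x : Fin (n + 1)) :
    prefixSum x (edgeRoot e) = if e.1 ≤ x ∧ x < e.2 then 1 else 0 := by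
  simp only [prefixSum_apply, edgeRoot, ev, Pi.sub_apply, Finset.sum_sub_distrib,
    Finset.sum_pi_single', Finset.mem_Iic]
  grind

theorem prefixSum_sum_smul_edgeRoot {S : EdgeSet n} (hS : IsGraph S) (c : Edge n → ℝ)
    (x : Fin (n + 1)) :
    prefixSum x (∑ e ∈ S, c e • edgeRoot e) = ∑ e ∈ S with e.1 ≤ x ∧ x < e.2, c e := by
  rw [map_sum, Finset.sum_filter]
  refine Finset.sum_congr rfl fun e he => ?_
  rw [map_smul, prefixSum_edgeRoot (hS e he), smul_eq_mul, mul_ite, mul_one, mul_zero]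

theorem prefixSum_last_sum_smul_edgeRoot {S : EdgeSet n} (hS : IsGraph S) (c : Edge n → ℝ) :
    prefixSum (Fin.last n) (∑ e ∈ S, c e • edgeRoot e) = 0 := by
  rw [prefixSum_sum_smul_edgeRoot hS, Finset.filter_false_of_mem, Finset.sum_empty]
  exact fun e _ h => (Fin.le_last e.2).not_gt h.2

theorem prefixSum_castSucc_sum_pathGraph (c : Edge n → ℝ) (i : Fin n) :
    prefixSum i.castSucc (∑ e ∈ (pathGraph n).toFinset, c e • edgeRoot e) =
      c (i.castSucc, i.succ) := by
  have hfilter : {e ∈ (pathGraph n).toFinset | e.1 ≤ i.castSucc ∧ i.castSucc < e.2} =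
      {(i.castSucc, i.succ)} := by
    ext e
    rw [Finset.mem_filter, Finset.mem_singleton, mem_toFinset_pathGraph]
    constructor
    · rintro ⟨⟨j, rfl⟩, hji, hij⟩
      rw [le_antisymm (Fin.castSucc_le_castSucc_iff.1 hji) (Fin.castSucc_lt_succ_iff.1 hij)]
    · rintro rfl
      exact ⟨⟨i, rfl⟩, le_rfl, Fin.castSucc_lt_succ⟩
  rw [prefixSum_sum_smul_edgeRoot isGraph_pathGraph, hfilter, Finset.sum_singleton]

theorem goodForest_pathGraph (n : ℕ) : GoodForest (pathGraph n) := by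
  refine goodForest_iff.2 ⟨isGraph_toFinset.1 isGraph_pathGraph, ?_, ?_, ?_⟩
  · rw [linearIndepOn_finset_iff]
    intro c hc e he
    obtain ⟨i, rfl⟩ := mem_toFinset_pathGraph.1 he
    rw [← prefixSum_castSucc_sum_pathGraph c i, hc, map_zero]
  · rintro ⟨i, j, k, l, hij, hjk, -, hik, -⟩
    obtain ⟨a, ha⟩ := mem_toFinset_pathGraph.1 hik
    grind
  · rw [pathGraph, List.pairwise_ofFn]
    intro i j hij
    grind [MayPrecede]

theorem mem_openCone_pathGraph {v : Vtype n} : v ∈ openCone ℝ edgeRoot (pathGraph n).toFinset ↔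
    (∀ i : Fin n, 0 < prefixSum i.castSucc v) ∧ prefixSum (Fin.last n) v = 0 := by
  constructor
  · rintro ⟨c, hc, rfl⟩
    refine ⟨fun i => ?_, prefixSum_last_sum_smul_edgeRoot isGraph_pathGraph c⟩
    rw [prefixSum_castSucc_sum_pathGraph]
    exact hc _ (mem_toFinset_pathGraph.2 ⟨i, rfl⟩)
  · rintro ⟨hpos, hlast⟩
    refine ⟨fun e => prefixSum e.1 v, fun e he => ?_, eq_of_prefixSum_eq fun x => ?_⟩
    · obtain ⟨i, rfl⟩ := mem_toFinset_pathGraph.1 he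
      exact hpos i
    · induction x using Fin.lastCases with
      | last => rw [prefixSum_last_sum_smul_edgeRoot isGraph_pathGraph, hlast]
      | cast i => rw [prefixSum_castSucc_sum_pathGraph]

theorem openCone_subset_openCone_pathGraph_iff {F : EdgeSet n} (hF : IsGraph F) :
    openCone ℝ edgeRoot F ⊆ openCone ℝ edgeRoot (pathGraph n).toFinset ↔
      ∀ i : Fin n, ∃ e ∈ F, e.1 ≤ i.castSucc ∧ i.castSucc < e.2 := by
  constructor
  · intro h i
    obtain ⟨_, c, hc, rfl⟩ := openCone_nonempty ℝ edgeRoot F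
    have hpos := (mem_openCone_pathGraph.1 (h ⟨c, hc, rfl⟩)).1 i
    rw [prefixSum_sum_smul_edgeRoot hF] at hpos
    obtain ⟨e, he, -⟩ := Finset.exists_ne_zero_of_sum_ne_zero hpos.ne'
    exact ⟨e, Finset.mem_filter.1 he⟩
  · rintro h _ ⟨c, hc, rfl⟩
    refine mem_openCone_pathGraph.2 ⟨fun i => ?_, prefixSum_last_sum_smul_edgeRoot hF c⟩
    obtain ⟨e, he⟩ := h i
    rw [prefixSum_sum_smul_edgeRoot hF]
    exact Finset.sum_pos (fun e he => hc e (Finset.mem_filter.1 he).1) ⟨e, Finset.mem_filter.2 he⟩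

/-- Let `(0, j)` be the longest edge at `0`. If `j` is not the last vertex, an edge passing over the
gap to the right of `j` would start at `0`, at `j`, or strictly in between, contradicting the choice
of `j`, the alternating property, or the noncrossing property. -/
theorem forall_exists_le_castSucc_lt_iff_mem (hn : 1 ≤ n) {F : EdgeSet n} (hF : IsGraph F)
    (hN : Noncrossing F) (hA : Alternating F) :
    (∀ i : Fin n, ∃ e ∈ F, e.1 ≤ i.castSucc ∧ i.castSucc < e.2) ↔ (0, Fin.last n) ∈ F := by
  constructor
  · intro h
    obtain ⟨⟨_, k⟩, hk, h0, -⟩ := h ⟨0, hn⟩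
    obtain rfl := Fin.le_zero_iff.1 h0
    obtain ⟨⟨_, j⟩, hj, hmax⟩ := Finset.exists_max_image {e ∈ F | e.1 = 0} Prod.snd
      ⟨_, Finset.mem_filter.2 ⟨hk, rfl⟩⟩
    obtain ⟨hjF, rfl⟩ := Finset.mem_filter.1 hj
    by_contra hlast
    obtain ⟨i, rfl⟩ := Fin.exists_castSucc_eq.2 fun h : j = Fin.last n => hlast (h ▸ hjF)
    obtain ⟨⟨a, b⟩, hab, hai, hib⟩ := h i
    rcases hai.eq_or_lt with rfl | hai
    · exact hA ⟨0, _, b, hF _ hjF, hib, hjF, hab⟩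
    rcases (Fin.zero_le a).eq_or_lt with rfl | h0a
    · exact (hmax _ (Finset.mem_filter.2 ⟨hab, rfl⟩)).not_gt hib
    · exact hN ⟨0, a, _, b, h0a, hai, hib, hjF, hab⟩
  · exact fun h i => ⟨_, h, Fin.zero_le _, Fin.castSucc_lt_last i⟩

theorem openCone_subset_openCone_pathGraph_iff_mem (hn : 1 ≤ n) {F : EdgeSet n} (hF : IsGraph F)
    (hN : Noncrossing F) (hA : Alternating F) :
    openCone ℝ edgeRoot F ⊆ openCone ℝ edgeRoot (pathGraph n).toFinset ↔ (0, Fin.last n) ∈ F :=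
  (openCone_subset_openCone_pathGraph_iff hF).trans
    (forall_exists_le_castSucc_lt_iff_mem hn hF hN hA)

end Path

section Main

theorem stmt14_general {n : ℕ} (R : BRTree n) (hR : R.Valid) (hroot : GoodForest R.root) :
    (R.leaves.Pairwise fun L L' => L.toFinset ≠ L'.toFinset) ∧
    (∀ F : EdgeSet n,
      (IsGraph F ∧ Acyclic F ∧ Noncrossing F ∧ Alternating F ∧
          openCone ℝ edgeRoot F ⊆ openCone ℝ edgeRoot R.root.toFinset)
        ↔ ∃ L ∈ R.leaves, L.toFinset = F) ∧
    (∀ L ∈ R.leaves, ∃ L', Relation.ReflTransGen SwapStep L L' ∧ IsLexLabeled L') := by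
  have hgood := hR.goodForest hroot
  have hred := hR.not_reducible
  have hgraph : ∀ L ∈ R.leaves, IsGraph L.toFinset := fun L hL =>
    isGraph_toFinset.2 (hgood L hL).1.1
  have halt : ∀ L ∈ R.leaves, Alternating L.toFinset :=
    fun L hL => (hgood L hL).alternating (hred L hL)
  refine ⟨?_, fun F => ⟨?_, ?_⟩, fun L hL => (hgood L hL).exists_isLexLabeled (hred L hL)⟩
  · refine (hR.pairwise_disjoint_openCone hroot).imp fun hdisj heq => ?_
    rw [heq, disjoint_self] at hdisj
    exact (openCone_nonempty ℝ edgeRoot _).ne_empty hdisj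
  · rintro ⟨hF, -, hN, hA, hsub⟩
    obtain ⟨x, hx⟩ := openCone_nonempty ℝ edgeRoot F
    obtain ⟨L, hL, hxL⟩ := (hR.mem_openCone_root_iff hroot).1 (hsub hx)
    exact ⟨L, hL, eq_of_mem_openCone_of_mem_openCone (hgraph L hL) hF (hgood L hL).2.2.1 hN
      (halt L hL) hA hxL hx⟩
  · rintro ⟨L, hL, rfl⟩
    exact ⟨hgraph L hL, (hgood L hL).2.1, (hgood L hL).2.2.1, halt L hL,
      fun x hx => (hR.mem_openCone_root_iff hroot).2 ⟨L, hL, hx⟩⟩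

end Main

/- STATEMENT 14 -/
theorem stmt14 {n : ℕ} (hn : 1 ≤ n) (R : BRTree n) (hR : R.Valid)
    (hroot : R.root = pathGraph n) :
    (R.leaves.Pairwise fun L L' => L.toFinset ≠ L'.toFinset) ∧
    (∀ F : EdgeSet n,
      (IsGraph F ∧ Acyclic F ∧ Noncrossing F ∧ Alternating F ∧ (0, Fin.last n) ∈ F)
        ↔ ∃ L ∈ R.leaves, L.toFinset = F) ∧
    (∀ L ∈ R.leaves, ∃ L', Relation.ReflTransGen SwapStep L L' ∧ IsLexLabeled L') := by
  have h := stmt14_general R hR (hroot ▸ goodForest_pathGraph n)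
  rw [hroot] at h
  refine ⟨h.1, fun F => .trans ?_ (h.2.1 F), h.2.2⟩
  grind [openCone_subset_openCone_pathGraph_iff_mem]

end RPaper
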